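/- Let k and ℓ be nonnegative integers with k ≤ ℓ, and for each ν with ℓ−k ≤ ν ≤ ℓ+k define b_{kℓν} = ((2ν+1)/2) ∫_{−1}^{1} x^k P_ℓ(x) P_ν(x) dx, so that x^k P_ℓ(x) = Σ_{ν=ℓ−k}^{ℓ+k} b_{kℓν} P_ν(x). Then |b_{kℓν}| ≤ 1 for all such ν. -/

import Mathlib

open Real

noncomputable section

/-- The Legendre polynomial of degree `n`, via Rodrigues' formula. -/
def legendreP (n : ℕ) (x : ℝ) : ℝ :=
  (1 / (2 ^ n * (n.factorial : ℝ))) * iteratedDeriv n (fun t : ℝ => (t ^ 2 - 1) ^ n) x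

/-! The recurrence `(2ℓ+1) x P_ℓ = (ℓ+1) P_{ℓ+1} + ℓ P_{ℓ-1}` exhibits `x P_ℓ` as a convex
combination of Legendre polynomials, so multiplication by `x` preserves their convex hull and
`x^k P_ℓ` lies in that hull. The functional sending a polynomial to its `ν`-th coefficient in the
Legendre basis takes only the values `0` and `1` on Legendre polynomials, by orthogonality, hence
takes values in `[0, 1]` on the hull. -/

section

open Polynomial

theorem iteratedDeriv_polynomial_eval {𝕜 : Type*} [NontriviallyNormedField 𝕜] (p : 𝕜[X]) (n : ℕ) :
    iteratedDeriv n (fun x ↦ p.eval x) = fun x ↦ (derivative^[n] p).eval x := by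
  induction n with
  | zero => simp only [iteratedDeriv_zero, Function.iterate_zero, id_eq]
  | succ n ih =>
    funext x
    rw [iteratedDeriv_succ, ih, Polynomial.deriv, Function.iterate_succ_apply']

/-- The polynomial `(X² - 1)ⁿ / (2ⁿ n!)`, whose `n`-th derivative is the Legendre polynomial of
degree `n` by Rodrigues' formula. -/
def rodriguesKernel (n : ℕ) : ℝ[X] :=
  (1 / (2 ^ n * (n.factorial : ℝ))) • (X ^ 2 - 1) ^ n

/-- The Legendre polynomial of degree `n` as an element of `ℝ[X]`; its evaluation is `legendreP`. -/
def legendrePoly (n : ℕ) : ℝ[X] :=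
  derivative^[n] (rodriguesKernel n)

theorem eval_legendrePoly (n : ℕ) (x : ℝ) : (legendrePoly n).eval x = legendreP n x := by
  have h := iteratedDeriv_polynomial_eval ((X ^ 2 - 1 : ℝ[X]) ^ n) n
  simp only [eval_pow, eval_sub, eval_X, eval_one] at h
  rw [legendreP, h, legendrePoly, rodriguesKernel, iterate_derivative_smul, eval_smul, smul_eq_mul]

theorem legendrePoly_zero : legendrePoly 0 = 1 := by
  simp [legendrePoly, rodriguesKernel]

theorem two_mul_succ_mul_one_div_two_pow_mul_factorial (n : ℕ) :
    (2 * (n + 1) : ℝ) * (1 / (2 ^ (n + 1) * ((n + 1).factorial : ℝ)))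
      = 1 / (2 ^ n * (n.factorial : ℝ)) := by
  rw [Nat.factorial_succ]
  push_cast
  field_simp
  ring

theorem smul_rodriguesKernel_succ (n : ℕ) :
    (2 * (n + 1)) • rodriguesKernel (n + 1) = (X ^ 2 - 1) * rodriguesKernel n := by
  rw [rodriguesKernel, rodriguesKernel, ← Nat.cast_smul_eq_nsmul ℝ, smul_smul, mul_smul_comm,
    ← pow_succ', ← two_mul_succ_mul_one_div_two_pow_mul_factorial n]
  push_cast
  rfl

theorem derivative_rodriguesKernel_succ (n : ℕ) :
    derivative (rodriguesKernel (n + 1)) = rodriguesKernel n * X := by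
  have hderiv : derivative ((X ^ 2 - 1 : ℝ[X]) ^ (n + 1))
      = (2 * (n + 1) : ℝ) • ((X ^ 2 - 1) ^ n * X) := by
    rw [derivative_pow_succ, derivative_sub, derivative_X_sq, derivative_one, smul_eq_C_mul]
    simp only [map_mul, map_add, map_natCast, map_one]
    ring
  rw [rodriguesKernel, rodriguesKernel, derivative_smul, hderiv, smul_smul, mul_comm (1 / _),
    two_mul_succ_mul_one_div_two_pow_mul_factorial, smul_mul_assoc]

theorem legendrePoly_succ (n : ℕ) :
    legendrePoly (n + 1) = X * legendrePoly n + n • derivative^[n - 1] (rodriguesKernel n) := by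
  rw [legendrePoly, Function.iterate_succ_apply, derivative_rodriguesKernel_succ,
    iterate_derivative_mul_X, ← legendrePoly, mul_comm]

theorem smul_iterate_derivative_rodriguesKernel_succ (n : ℕ) :
    (n + 2) • derivative^[n] (rodriguesKernel (n + 1))
      = X * legendrePoly (n + 1) - legendrePoly n := by
  have hlower : n • derivative^[n - 1] (rodriguesKernel n * X)
      = n • derivative^[n] (rodriguesKernel (n + 1)) := by
    cases n with
    | zero => simp only [zero_smul]
    | succ m => rw [← derivative_rodriguesKernel_succ, ← Function.iterate_succ_apply]; rfl
  have hexpand : (X ^ 2 - 1) * rodriguesKernel n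
      = rodriguesKernel n * X * X - rodriguesKernel n := by ring
  have hdiff := congrArg derivative^[n] (smul_rodriguesKernel_succ n)
  rw [hexpand, iterate_derivative_smul, iterate_derivative_sub, iterate_derivative_mul_X,
    iterate_derivative_mul_X, hlower, ← legendrePoly] at hdiff
  rw [legendrePoly_succ]
  simp only [nsmul_eq_mul] at hdiff ⊢
  push_cast at hdiff ⊢
  linear_combination hdiff

-- At `n = 0` the truncated index `n - 1` is harmless: its coefficient vanishes.
theorem legendrePoly_recurrence (n : ℕ) :
    (n + 1) • legendrePoly (n + 1) + n • legendrePoly (n - 1)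
      = (2 * n + 1) • (X * legendrePoly n) := by
  cases n with
  | zero => simp [legendrePoly_succ]
  | succ m =>
    have hsucc := legendrePoly_succ (m + 1)
    have hkernel := smul_iterate_derivative_rodriguesKernel_succ m
    simp only [Nat.add_sub_cancel, nsmul_eq_mul] at hsucc hkernel ⊢
    push_cast at hsucc hkernel ⊢
    linear_combination ((m : ℝ[X]) + 2) * hsucc + ((m : ℝ[X]) + 1) * hkernel

theorem X_mul_legendrePoly_mem_convexHull (n : ℕ) :
    X * legendrePoly n ∈ convexHull ℝ (Set.range legendrePoly) := by
  have hmem (m : ℕ) : legendrePoly m ∈ convexHull ℝ (Set.range legendrePoly) :=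
    subset_convexHull ℝ _ (Set.mem_range_self m)
  have hcomb : X * legendrePoly n = ((n + 1 : ℝ) / (2 * n + 1)) • legendrePoly (n + 1)
      + ((n : ℝ) / (2 * n + 1)) • legendrePoly (n - 1) := by
    have hrec := legendrePoly_recurrence n
    simp only [← Nat.cast_smul_eq_nsmul ℝ] at hrec
    push_cast at hrec
    rw [div_eq_inv_mul, div_eq_inv_mul, mul_smul, mul_smul, ← smul_add, hrec,
      inv_smul_smul₀ (by positivity)]
  rw [hcomb]
  exact convex_convexHull ℝ _ (hmem _) (hmem _) (by positivity) (by positivity)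
    (by field_simp; ring)

theorem X_pow_mul_legendrePoly_mem_convexHull (k n : ℕ) :
    X ^ k * legendrePoly n ∈ convexHull ℝ (Set.range legendrePoly) := by
  have hX : convexHull ℝ (Set.range legendrePoly)
      ⊆ LinearMap.mulLeft ℝ X ⁻¹' convexHull ℝ (Set.range legendrePoly) :=
    convexHull_min (Set.range_subset_iff.mpr X_mul_legendrePoly_mem_convexHull)
      ((convex_convexHull ℝ _).linear_preimage _)
  induction k with
  | zero =>
    rw [pow_zero, one_mul]
    exact subset_convexHull ℝ _ (Set.mem_range_self n)
  | succ k ih =>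
    rw [pow_succ', mul_assoc]
    exact hX ih

/-- Integration of polynomials over the interval from `a` to `b`, as a linear functional. -/
def polynomialIntegral (a b : ℝ) : ℝ[X] →ₗ[ℝ] ℝ where
  toFun p := ∫ x in a..b, p.eval x
  map_add' p q := by
    simp only [eval_add]
    exact intervalIntegral.integral_add (p.continuous.intervalIntegrable a b)
      (q.continuous.intervalIntegrable a b)
  map_smul' c p := by
    simp only [eval_smul, smul_eq_mul, intervalIntegral.integral_const_mul, RingHom.id_apply]

theorem polynomialIntegral_apply (a b : ℝ) (p : ℝ[X]) :
    polynomialIntegral a b p = ∫ x in a..b, p.eval x :=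
  rfl

theorem polynomialIntegral_derivative_mul {a b : ℝ} {p : ℝ[X]} (ha : p.eval a = 0)
    (hb : p.eval b = 0) (q : ℝ[X]) :
    polynomialIntegral a b (derivative p * q) = -polynomialIntegral a b (p * derivative q) := by
  have hparts := intervalIntegral.integral_deriv_mul_eq_sub (a := a) (b := b)
    (fun x _ ↦ p.hasDerivAt x) (fun x _ ↦ q.hasDerivAt x)
    (p.derivative.continuous.intervalIntegrable a b)
    (q.derivative.continuous.intervalIntegrable a b)
  simp only [← eval_mul, ← eval_add] at hparts
  rw [← polynomialIntegral_apply, map_add, eval_mul, eval_mul, ha, hb, zero_mul, zero_mul,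
    sub_zero] at hparts
  exact eq_neg_of_add_eq_zero_left hparts

theorem polynomialIntegral_iterate_derivative_mul {a b : ℝ} {p : ℝ[X]} {n : ℕ}
    (ha : ∀ i < n, (derivative^[i] p).eval a = 0) (hb : ∀ i < n, (derivative^[i] p).eval b = 0)
    (q : ℝ[X]) :
    polynomialIntegral a b (derivative^[n] p * q)
      = (-1) ^ n * polynomialIntegral a b (p * derivative^[n] q) := by
  induction n generalizing q with
  | zero => simp only [Function.iterate_zero, id_eq, pow_zero, one_mul]
  | succ n ih =>
    rw [Function.iterate_succ_apply',
      polynomialIntegral_derivative_mul (ha n n.lt_succ_self) (hb n n.lt_succ_self),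
      ih (fun i hi ↦ ha i (hi.trans n.lt_succ_self)) (fun i hi ↦ hb i (hi.trans n.lt_succ_self)),
      ← Function.iterate_succ_apply, pow_succ]
    ring

theorem eval_iterate_derivative_rodriguesKernel {n i : ℕ} (hi : i < n) {x : ℝ} (hx : x ^ 2 = 1) :
    (derivative^[i] (rodriguesKernel n)).eval x = 0 := by
  obtain ⟨r, hr⟩ := pow_sub_dvd_iterate_derivative_pow (X ^ 2 - 1 : ℝ[X]) n i
  have hroot : (X ^ 2 - 1 : ℝ[X]).eval x = 0 := by simp [hx]
  rw [rodriguesKernel, iterate_derivative_smul, hr, eval_smul, eval_mul, eval_pow, hroot,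
    zero_pow (Nat.sub_ne_zero_of_lt hi), zero_mul, smul_zero]

theorem polynomialIntegral_legendrePoly_mul_of_natDegree_lt {n : ℕ} {q : ℝ[X]}
    (hq : q.natDegree < n) : polynomialIntegral (-1) 1 (legendrePoly n * q) = 0 := by
  rw [legendrePoly, polynomialIntegral_iterate_derivative_mul
      (fun _ hi ↦ eval_iterate_derivative_rodriguesKernel hi (by norm_num))
      (fun _ hi ↦ eval_iterate_derivative_rodriguesKernel hi (by norm_num)),
    iterate_derivative_eq_zero hq, mul_zero, map_zero, mul_zero]

theorem natDegree_legendrePoly_le (n : ℕ) : (legendrePoly n).natDegree ≤ n := by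
  have hkernel : (rodriguesKernel n).natDegree ≤ n * 2 :=
    (natDegree_smul_le _ _).trans (natDegree_pow_le_of_le n (by compute_degree))
  have hderiv := natDegree_iterate_derivative (rodriguesKernel n) n
  rw [legendrePoly]
  lia

theorem polynomialIntegral_legendrePoly_mul_legendrePoly_of_ne {m n : ℕ} (h : m ≠ n) :
    polynomialIntegral (-1) 1 (legendrePoly m * legendrePoly n) = 0 := by
  rcases h.lt_or_gt with hlt | hgt
  · rw [mul_comm]
    exact polynomialIntegral_legendrePoly_mul_of_natDegree_lt
      ((natDegree_legendrePoly_le m).trans_lt hlt)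
  · exact polynomialIntegral_legendrePoly_mul_of_natDegree_lt
      ((natDegree_legendrePoly_le n).trans_lt hgt)

theorem polynomialIntegral_legendrePoly_recurrence (a b : ℝ) (n : ℕ) (q : ℝ[X]) :
    (n + 1) * polynomialIntegral a b (legendrePoly (n + 1) * q)
        + n * polynomialIntegral a b (legendrePoly (n - 1) * q)
      = (2 * n + 1) * polynomialIntegral a b (X * legendrePoly n * q) := by
  have h := congrArg (polynomialIntegral a b ∘ₗ LinearMap.mulRight ℝ q) (legendrePoly_recurrence n)
  rw [map_add, map_nsmul, map_nsmul, map_nsmul] at h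
  simp only [LinearMap.comp_apply, LinearMap.mulRight_apply, nsmul_eq_mul] at h
  exact_mod_cast h

-- Expanding `∫ x P_n P_{n+1}` by the recurrence at `n` and at `n + 1` relates consecutive norms.
theorem polynomialIntegral_legendrePoly_mul_self (n : ℕ) :
    polynomialIntegral (-1) 1 (legendrePoly n * legendrePoly n) = 2 / (2 * n + 1) := by
  induction n with
  | zero =>
    simp only [polynomialIntegral_apply, legendrePoly_zero, mul_one, eval_one, integral_one]
    norm_num
  | succ n ih =>
    have hraise := polynomialIntegral_legendrePoly_recurrence (-1) 1 n (legendrePoly (n + 1))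
    have hlower := polynomialIntegral_legendrePoly_recurrence (-1) 1 (n + 1) (legendrePoly n)
    have hcross : X * legendrePoly (n + 1) * legendrePoly n
        = X * legendrePoly n * legendrePoly (n + 1) := by ring
    rw [polynomialIntegral_legendrePoly_mul_legendrePoly_of_ne
      (show n - 1 ≠ n + 1 by lia)] at hraise
    rw [polynomialIntegral_legendrePoly_mul_legendrePoly_of_ne
      (show n + 1 + 1 ≠ n by lia), Nat.add_sub_cancel, hcross] at hlower
    have hstep : (2 * n + 3)
          * polynomialIntegral (-1) 1 (legendrePoly (n + 1) * legendrePoly (n + 1))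
        = (2 * n + 1) * polynomialIntegral (-1) 1 (legendrePoly n * legendrePoly n) := by
      push_cast at hlower
      apply mul_left_cancel₀ (show (n : ℝ) + 1 ≠ 0 by positivity)
      linear_combination (2 * (n : ℝ) + 3) * hraise - (2 * (n : ℝ) + 1) * hlower
    rw [ih, mul_div_cancel₀ _ (by positivity)] at hstep
    rw [eq_div_iff (by positivity)]
    push_cast
    linear_combination hstep

/-- The `ν`-th coefficient of a polynomial in the Legendre basis, as a linear functional. -/
def legendreCoeff (ν : ℕ) : ℝ[X] →ₗ[ℝ] ℝ :=
  ((2 * (ν : ℝ) + 1) / 2) • polynomialIntegral (-1) 1 ∘ₗ LinearMap.mulRight ℝ (legendrePoly ν)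

theorem legendreCoeff_apply (ν : ℕ) (p : ℝ[X]) :
    legendreCoeff ν p = (2 * (ν : ℝ) + 1) / 2 * ∫ x in (-1 : ℝ)..1, p.eval x * legendreP ν x := by
  simp only [legendreCoeff, LinearMap.smul_apply, LinearMap.comp_apply, LinearMap.mulRight_apply,
    polynomialIntegral_apply, eval_mul, eval_legendrePoly, smul_eq_mul]

theorem legendreCoeff_legendrePoly (ν n : ℕ) :
    legendreCoeff ν (legendrePoly n) = if n = ν then 1 else 0 := by
  rw [legendreCoeff, LinearMap.smul_apply, LinearMap.comp_apply, LinearMap.mulRight_apply,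
    smul_eq_mul]
  split_ifs with h
  · rw [h, polynomialIntegral_legendrePoly_mul_self]
    field_simp
  · rw [polynomialIntegral_legendrePoly_mul_legendrePoly_of_ne h, mul_zero]

theorem legendreCoeff_mem_Icc_of_mem_convexHull (ν : ℕ) {p : ℝ[X]}
    (hp : p ∈ convexHull ℝ (Set.range legendrePoly)) : legendreCoeff ν p ∈ Set.Icc (0 : ℝ) 1 := by
  have hrange : Set.range legendrePoly ⊆ legendreCoeff ν ⁻¹' Set.Icc 0 1 := by
    rintro _ ⟨n, rfl⟩
    rw [Set.mem_preimage, legendreCoeff_legendrePoly]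
    split_ifs <;> simp
  exact convexHull_min hrange ((convex_Icc 0 1).linear_preimage _) hp

end

theorem legendre_expansion_coeff_bound_general (k ℓ ν : ℕ) :
    ((2 * (ν : ℝ) + 1) / 2) * ∫ x in (-1 : ℝ)..1, x ^ k * legendreP ℓ x * legendreP ν x
      ∈ Set.Icc (0 : ℝ) 1 := by
  have hmem := legendreCoeff_mem_Icc_of_mem_convexHull ν (X_pow_mul_legendrePoly_mem_convexHull k ℓ)
  simpa only [legendreCoeff_apply, Polynomial.eval_mul, Polynomial.eval_pow, Polynomial.eval_X,
    eval_legendrePoly] using hmem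

/-- For `k ≤ ℓ` and `ℓ - k ≤ ν ≤ ℓ + k`, the coefficients
`b_{kℓν} = ((2ν+1)/2) ∫_{-1}^{1} x^k P_ℓ(x) P_ν(x) dx` of the Legendre expansion of
`x^k P_ℓ(x)` satisfy `|b_{kℓν}| ≤ 1`. -/
theorem legendre_expansion_coeff_bound (k ℓ ν : ℕ) (hkℓ : k ≤ ℓ)
    (hν₁ : ℓ - k ≤ ν) (hν₂ : ν ≤ ℓ + k) :
    |((2 * (ν : ℝ) + 1) / 2) * ∫ x in (-1 : ℝ)..1, x ^ k * legendreP ℓ x * legendreP ν x|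
      ≤ 1 := by
  obtain ⟨hnonneg, hle⟩ := legendre_expansion_coeff_bound_general k ℓ ν
  rwa [abs_of_nonneg hnonneg]
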